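/- arXiv:1210.3862 — 2 statements merged into one kernel-verified Lean document; each statement's English description precedes it below -/
import Mathlib

section
/- For all x ≥ 2 and Q ≥ 1, ∑_{q ≤ Q} (q/φ(q)) ∑_{χ primitive mod q} |ψ_K(x, χ∘N)|² ≪ (x + Q²)·x·log x, where the inner sum is over primitive Dirichlet characters χ modulo q, φ is Euler's totient function, and the implied constant depends only on K. -/
/-!
Setting: `K` is a number field, Galois over `ℚ`, with ring of integers `𝓞 K`.
We formalize the objects from Smith, "A generalization of the
Barban-Davenport-Halberstam Theorem to number fields".
-/

open NumberField Ideal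
open scoped Classical BigOperators

noncomputable section

/-- `𝔞` is a (positive) power of a nonzero prime ideal of `𝓞 K`. -/
def IsPrimeIdealPower {K : Type*} [Field K] [NumberField K] (𝔞 : Ideal (𝓞 K)) : Prop :=
  ∃ (𝔭 : Ideal (𝓞 K)) (m : ℕ), 𝔭.IsPrime ∧ 𝔭 ≠ ⊥ ∧ 1 ≤ m ∧ 𝔞 = 𝔭 ^ m

/-- The von Mangoldt function on ideals of `𝓞 K`: `Λ_K(𝔭^m) = log N𝔭`, and `0` otherwise.
(For `𝔞 = 𝔭^m` with `𝔭` prime, the radical of `𝔞` is `𝔭`.) -/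
def LambdaK (K : Type*) [Field K] [NumberField K] (𝔞 : Ideal (𝓞 K)) : ℝ :=
  if IsPrimeIdealPower 𝔞 then Real.log (absNorm 𝔞.radical) else 0

/-- `ψ_K(x; q, a) = ∑_{N𝔭^m ≤ x, N𝔭^m ≡ a (mod q)} log N𝔭`. -/
def psiK (K : Type*) [Field K] [NumberField K] (x : ℝ) (q : ℕ) (a : ZMod q) : ℝ :=
  ∑' 𝔞 : Ideal (𝓞 K),
    if (absNorm 𝔞 : ℝ) ≤ x ∧ ((absNorm 𝔞 : ZMod q) = a) then LambdaK K 𝔞 else 0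

/-- `G_q`: the image of `Gal(K(ζ_q)/K)` in `(ℤ/qℤ)ˣ` under restriction to `ℚ(ζ_q)` followed
by the canonical isomorphism `Gal(ℚ(ζ_q)/ℚ) ≅ (ℤ/qℤ)ˣ`; concretely, the range of the map
sending `σ ∈ Gal(K(ζ_q)/K)` to the exponent `a ∈ (ℤ/qℤ)ˣ` with `σ(ζ_q) = ζ_q^a`. -/
def Gq (K : Type*) [Field K] [NumberField K] (q : ℕ) : Subgroup (ZMod q)ˣ :=
  if h : 0 < q then
    haveI : NeZero q := ⟨h.ne'⟩
    haveI : NeZero (((⟨q, h⟩ : ℕ+) : ℕ) : K) := ⟨Nat.cast_ne_zero.mpr h.ne'⟩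
    ((IsCyclotomicExtension.zeta_spec (⟨q, h⟩ : ℕ+) K
        (CyclotomicField (⟨q, h⟩ : ℕ+) K)).autToPow K).range
  else ⊥

/-- `φ_K(q) = |G_q|`. -/
def phiK (K : Type*) [Field K] [NumberField K] (q : ℕ) : ℕ :=
  Nat.card (Gq K q)

/-- `ψ_K(x, χ∘N) = ∑_{N𝔞 ≤ x} χ(N𝔞) Λ_K(𝔞)`. -/
def psiKChi (K : Type*) [Field K] [NumberField K] (x : ℝ) {q : ℕ}
    (χ : DirichletCharacter ℂ q) : ℂ :=
  ∑' 𝔞 : Ideal (𝓞 K),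
    if (absNorm 𝔞 : ℝ) ≤ x then χ (absNorm 𝔞 : ZMod q) * (LambdaK K 𝔞 : ℂ) else 0

/-- `ψ'_K(x, χ∘N)`: equals `ψ_K(x, χ∘N) − x` when `χ` is trivial on `G_q`,
and `ψ_K(x, χ∘N)` otherwise. -/
def psiKChi' (K : Type*) [Field K] [NumberField K] (x : ℝ) {q : ℕ}
    (χ : DirichletCharacter ℂ q) : ℂ :=
  if ∀ a ∈ Gq K q, χ (a : ZMod q) = 1 then psiKChi K x χ - x else psiKChi K x χ

/-- The common residue degree `f(K/ℚ; p)` of the primes of `K` above `p`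
(well-defined when `K/ℚ` is Galois): any prime `𝔭` above `p` has `N𝔭 = p^f`. -/
def resDeg (K : Type*) [Field K] [NumberField K] (p : ℕ) : ℕ :=
  if h : ∃ 𝔭 : Ideal (𝓞 K), 𝔭.IsPrime ∧ 𝔭 ≠ ⊥ ∧ (p : 𝓞 K) ∈ 𝔭 then
    (absNorm h.choose).factorization p
  else 0

/-- `D_K(n)`: the number of prime ideal powers `𝔭^m` of `𝓞 K` with `N𝔭^m = n`. -/
def DK (K : Type*) [Field K] [NumberField K] (n : ℕ) : ℕ :=
  Nat.card {𝔞 : Ideal (𝓞 K) // IsPrimeIdealPower 𝔞 ∧ absNorm 𝔞 = n}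

/-- `Λ_K^*(n) = f(K/ℚ; p) · log p` if `n = p^k` is a prime power, and `0` otherwise. -/
def LambdaStarK (K : Type*) [Field K] [NumberField K] (n : ℕ) : ℝ :=
  if IsPrimePow n then (resDeg K n.minFac : ℝ) * Real.log n.minFac else 0

end

/-!
Grouping ideals by their norm `n` writes `ψ_K(x, χ∘N)` as `∑ n ≤ x, c n * χ n` with
`0 ≤ c n ≤ [K : ℚ] Λ(n)`, since the norms of the primes above `p` have product dividing
`p ^ [K : ℚ]`. Chebyshev's estimate then gives `∑ n ≤ x, c n ^ 2 ≪ x log x`, and the multiplicative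
large sieve concludes.

The large sieve itself goes by duality. For points `x` on the circle that are `δ`-spaced, the dual
form `∑ n < N, |∑ x, c x * e(n x)| ^ 2` is dominated by its average over differences `n = a - b`
with `a, b` in a longer interval, which is the Hermitian form of the Fejér kernel at the
differences `x - y`. The kernel decays quadratically, so spacing bounds its row sums and the Schur
test applies. Farey points of order `R` are `R⁻²`-spaced, because a nonzero difference of two of
them has order at most `R ^ 2`, and Gauss sums convert primitive characters into additive ones.
-/

section BilinearForms

open scoped ComplexConjugate

variable {ι κ 𝕜 : Type*} [RCLike 𝕜]

lemma sum_norm_sq_sum_mul_le_of_dual {s : Finset ι} {t : Finset κ} {φ : ι → κ → 𝕜} {B : ℝ}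
    (hB : 0 ≤ B)
    (hφ : ∀ c : ι → 𝕜, ∑ k ∈ t, ‖∑ i ∈ s, c i * φ i k‖ ^ 2 ≤ B * ∑ i ∈ s, ‖c i‖ ^ 2) (a : κ → 𝕜) :
    ∑ i ∈ s, ‖∑ k ∈ t, a k * φ i k‖ ^ 2 ≤ B * ∑ k ∈ t, ‖a k‖ ^ 2 := by
  set S : ι → 𝕜 := fun i ↦ ∑ k ∈ t, a k * φ i k
  set T : ℝ := ∑ i ∈ s, ‖S i‖ ^ 2
  have hT0 : 0 ≤ T := by positivity
  have hswap : (T : 𝕜) = ∑ k ∈ t, a k * ∑ i ∈ s, conj (S i) * φ i k := by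
    simp only [T, RCLike.ofReal_sum, RCLike.ofReal_pow, ← RCLike.conj_mul, Finset.mul_sum]
    rw [Finset.sum_comm]
    refine Finset.sum_congr rfl fun i _ ↦ ?_
    simp only [S, Finset.mul_sum, mul_left_comm]
  have hT : T ≤ ∑ k ∈ t, ‖a k‖ * ‖∑ i ∈ s, conj (S i) * φ i k‖ := by
    calc T = ‖(T : 𝕜)‖ := by rw [RCLike.norm_ofReal, abs_of_nonneg hT0]
      _ ≤ _ := by
        rw [hswap]
        exact (norm_sum_le _ _).trans_eq (by simp only [norm_mul])
  have hsq : T * T ≤ (B * ∑ k ∈ t, ‖a k‖ ^ 2) * T := by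
    calc T * T = T ^ 2 := (sq T).symm
      _ ≤ (∑ k ∈ t, ‖a k‖ * ‖∑ i ∈ s, conj (S i) * φ i k‖) ^ 2 := by gcongr
      _ ≤ (∑ k ∈ t, ‖a k‖ ^ 2) * ∑ k ∈ t, ‖∑ i ∈ s, conj (S i) * φ i k‖ ^ 2 :=
        Finset.sum_mul_sq_le_sq_mul_sq ..
      _ ≤ (∑ k ∈ t, ‖a k‖ ^ 2) * (B * ∑ i ∈ s, ‖conj (S i)‖ ^ 2) := by gcongr; exact hφ _
      _ = (B * ∑ k ∈ t, ‖a k‖ ^ 2) * T := by simp only [RCLike.norm_conj, T]; ring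
  rcases hT0.eq_or_lt with h | h
  · rw [← h]; positivity
  · exact le_of_mul_le_mul_right hsq h

/-- The **Schur test** for a symmetric kernel. -/
lemma norm_sum_sum_mul_conj_mul_le {s : Finset ι} {k : ι → ι → ℝ} {B : ℝ}
    (hk : ∀ i j, 0 ≤ k i j) (hsymm : ∀ i j, k i j = k j i)
    (hrow : ∀ i ∈ s, ∑ j ∈ s, k i j ≤ B) (c : ι → 𝕜) :
    ‖∑ i ∈ s, ∑ j ∈ s, c i * conj (c j) * (k i j : 𝕜)‖ ≤ B * ∑ i ∈ s, ‖c i‖ ^ 2 := by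
  have hterm (i j : ι) : ‖c i * conj (c j) * (k i j : 𝕜)‖ ≤
      ‖c i‖ ^ 2 * k i j / 2 + ‖c j‖ ^ 2 * k j i / 2 := by
    rw [norm_mul, norm_mul, RCLike.norm_conj, RCLike.norm_of_nonneg (hk i j), hsymm j i]
    nlinarith [mul_nonneg (sq_nonneg (‖c i‖ - ‖c j‖)) (hk i j)]
  calc ‖∑ i ∈ s, ∑ j ∈ s, c i * conj (c j) * (k i j : 𝕜)‖
      ≤ ∑ i ∈ s, ∑ j ∈ s, (‖c i‖ ^ 2 * k i j / 2 + ‖c j‖ ^ 2 * k j i / 2) :=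
        norm_sum_le_of_le _ fun i _ ↦ norm_sum_le_of_le _ fun j _ ↦ hterm i j
    _ = ∑ i ∈ s, ‖c i‖ ^ 2 * ∑ j ∈ s, k i j := by
        simp_rw [Finset.sum_add_distrib]
        rw [Finset.sum_comm (f := fun i j ↦ ‖c j‖ ^ 2 * k j i / 2), ← Finset.sum_add_distrib]
        simp_rw [← Finset.sum_add_distrib, add_halves, Finset.mul_sum]
    _ ≤ B * ∑ i ∈ s, ‖c i‖ ^ 2 := by
        rw [Finset.mul_sum]
        refine Finset.sum_le_sum fun i hi ↦ ?_
        rw [mul_comm B]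
        gcongr
        exact hrow i hi

end BilinearForms

section FejerKernel

/-- `M` times the Fejér kernel of order `M`: the squared modulus of the Dirichlet-type sum
`∑ n < M, e(n x)`. -/
noncomputable def fejerKernel (M : ℕ) (x : UnitAddCircle) : ℝ :=
  ‖∑ n ∈ Finset.range M, fourier (n : ℤ) x‖ ^ 2

variable (M : ℕ) (x : UnitAddCircle)

lemma fejerKernel_nonneg : 0 ≤ fejerKernel M x := by
  unfold fejerKernel; positivity

lemma ofReal_fejerKernel : (fejerKernel M x : ℂ) =
    ∑ a ∈ Finset.range M, ∑ b ∈ Finset.range M, fourier (a - b : ℤ) x := by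
  rw [fejerKernel, Complex.ofReal_pow, ← Complex.mul_conj', map_sum, Finset.sum_mul_sum]
  simp only [← fourier_neg, ← fourier_add, sub_eq_add_neg]

lemma fejerKernel_neg : fejerKernel M (-x) = fejerKernel M x := by
  rw [← Complex.ofReal_inj, ofReal_fejerKernel, ofReal_fejerKernel, Finset.sum_comm]
  simp only [fourier_apply, smul_neg, ← neg_smul, neg_sub]

lemma fejerKernel_le_sq : fejerKernel M x ≤ (M : ℝ) ^ 2 := by
  unfold fejerKernel
  gcongr
  exact (norm_sum_le _ _).trans (by simp only [fourier_apply, Circle.norm_coe]; simp)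

lemma exists_coe_eq_abs_eq_norm : ∃ t : ℝ, (t : UnitAddCircle) = x ∧ |t| = ‖x‖ := by
  induction x using QuotientAddGroup.induction_on with | _ t
  refine ⟨t - round t, ?_, UnitAddCircle.norm_eq.symm⟩
  rw [AddCircle.coe_sub, sub_eq_self, AddCircle.coe_eq_zero_iff]
  exact ⟨round t, by simp⟩

lemma four_mul_norm_le_norm_fourier_one_sub_one : 4 * ‖x‖ ≤ ‖(fourier 1 x : ℂ) - 1‖ := by
  obtain ⟨t, rfl, ht⟩ := exists_coe_eq_abs_eq_norm x
  have ht' : |t| ≤ 1 / 2 := by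
    rw [ht]
    simpa using AddCircle.norm_le_half_period 1 one_ne_zero (x := (t : UnitAddCircle))
  have hchar : (fourier 1 (t : UnitAddCircle) : ℂ) =
      Complex.exp (Complex.I * (2 * Real.pi * t : ℝ)) := by
    rw [fourier_coe_apply]
    push_cast
    ring_nf
  have hjordan : 2 * |t| ≤ |Real.sin (Real.pi * t)| := by
    have hπt : |Real.pi * t| = Real.pi * |t| := by rw [abs_mul, abs_of_pos Real.pi_pos]
    have := Real.mul_abs_le_abs_sin (x := Real.pi * t) (by rw [hπt]; nlinarith [Real.pi_pos])
    rwa [hπt, ← mul_assoc, div_mul_cancel₀ _ Real.pi_ne_zero] at this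
  calc 4 * ‖(t : UnitAddCircle)‖ = 2 * (2 * |t|) := by rw [← ht]; ring
    _ ≤ 2 * |Real.sin (Real.pi * t)| := by gcongr
    _ = ‖(fourier 1 (t : UnitAddCircle) : ℂ) - 1‖ := by
      rw [hchar, Complex.norm_exp_I_mul_ofReal_sub_one, norm_mul, Real.norm_eq_abs,
        Real.norm_eq_abs, abs_two]
      ring_nf

lemma four_mul_norm_sq_mul_fejerKernel_le : 4 * ‖x‖ ^ 2 * fejerKernel M x ≤ 1 := by
  have hgeom : ‖∑ n ∈ Finset.range M, (fourier (n : ℤ) x : ℂ)‖ * ‖(fourier 1 x : ℂ) - 1‖ ≤ 2 := by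
    have hpow (n : ℕ) : (fourier (n : ℤ) x : ℂ) = fourier 1 x ^ n := by
      simp [fourier_apply, AddCircle.toCircle_nsmul]
    simp_rw [hpow]
    rw [← norm_mul, geom_sum_mul]
    refine (norm_sub_le _ _).trans_eq ?_
    rw [norm_pow, fourier_apply, Circle.norm_coe]
    norm_num
  have hle : 4 * ‖x‖ * ‖∑ n ∈ Finset.range M, (fourier (n : ℤ) x : ℂ)‖ ≤ 2 := by
    rw [mul_comm]
    exact (by gcongr; exact four_mul_norm_le_norm_fourier_one_sub_one x : _ ≤ _).trans hgeom
  have := pow_le_pow_left₀ (by positivity) hle 2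
  unfold fejerKernel
  linarith

end FejerKernel

section WellSpaced

variable {ι : Type*} {s : Finset ι} {t f : ι → ℝ} {δ A B : ℝ}

lemma sum_le_of_nonneg_of_pairwise_le_abs_sub (hδ : 0 < δ) (hA : 0 ≤ A) (hB : 0 ≤ B)
    (ht : ∀ i ∈ s, 0 ≤ t i) (hsep : (s : Set ι).Pairwise fun i j ↦ δ ≤ |t i - t j|)
    (hfA : ∀ i ∈ s, f i ≤ A) (hfB : ∀ i ∈ s, t i ^ 2 * f i ≤ B) :
    ∑ i ∈ s, f i ≤ A + Real.pi ^ 2 / 6 * (B / δ ^ 2) := by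
  set k : ι → ℕ := fun i ↦ ⌊t i / δ⌋₊
  set g : ℕ → ℝ := fun n ↦ (if n = 0 then A else 0) + 1 / (n : ℝ) ^ 2 * (B / δ ^ 2)
  have hinj : Set.InjOn k s := by
    intro i hi j hj hij
    by_contra hne
    have hfloor : ⌊t i / δ⌋ = ⌊t j / δ⌋ := by
      rw [← Int.natCast_floor_eq_floor (div_nonneg (ht i hi) hδ.le),
        ← Int.natCast_floor_eq_floor (div_nonneg (ht j hj) hδ.le)]
      exact congrArg Nat.cast hij
    have := Int.abs_sub_lt_one_of_floor_eq_floor hfloor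
    rw [← sub_div, abs_div, abs_of_pos hδ, div_lt_one hδ] at this
    exact this.not_ge (hsep hi hj hne)
  have hfg : ∀ i ∈ s, f i ≤ g (k i) := by
    intro i hi
    rcases (k i).eq_zero_or_pos with hk | hk
    · simpa [g, hk] using hfA i hi
    · have hkt : (k i : ℝ) * δ ≤ t i :=
        (le_div_iff₀ hδ).1 (Nat.floor_le (div_nonneg (ht i hi) hδ.le))
      have hkδ : 0 < (k i : ℝ) * δ := by positivity
      calc f i ≤ B / t i ^ 2 := by
            rw [le_div_iff₀' (pow_pos (hkδ.trans_le hkt) 2)]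
            exact hfB i hi
        _ ≤ B / ((k i : ℝ) * δ) ^ 2 := by gcongr
        _ = g (k i) := by simp only [g, if_neg hk.ne']; field_simp; ring
  calc ∑ i ∈ s, f i ≤ ∑ i ∈ s, g (k i) := Finset.sum_le_sum hfg
    _ = ∑ n ∈ s.image k, g n := (Finset.sum_image hinj).symm
    _ = (if 0 ∈ s.image k then A else 0) +
        (∑ n ∈ s.image k, 1 / (n : ℝ) ^ 2) * (B / δ ^ 2) := by
      rw [Finset.sum_add_distrib, Finset.sum_ite_eq', Finset.sum_mul]
    _ ≤ A + Real.pi ^ 2 / 6 * (B / δ ^ 2) := by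
      gcongr
      · split_ifs <;> simp [hA]
      · exact sum_le_hasSum _ (fun n _ ↦ by positivity) hasSum_zeta_two

lemma sum_le_of_pairwise_le_abs_sub (hδ : 0 < δ) (hA : 0 ≤ A) (hB : 0 ≤ B)
    (hsep : (s : Set ι).Pairwise fun i j ↦ δ ≤ |t i - t j|)
    (hfA : ∀ i ∈ s, f i ≤ A) (hfB : ∀ i ∈ s, t i ^ 2 * f i ≤ B) :
    ∑ i ∈ s, f i ≤ 2 * A + Real.pi ^ 2 / 3 * (B / δ ^ 2) := by
  have hpos := sum_le_of_nonneg_of_pairwise_le_abs_sub (s := s.filter fun i ↦ 0 ≤ t i)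
    hδ hA hB (fun i hi ↦ (Finset.mem_filter.1 hi).2)
    (hsep.mono (Finset.coe_subset.2 (Finset.filter_subset _ _)))
    (fun i hi ↦ hfA i (Finset.mem_filter.1 hi).1) fun i hi ↦ hfB i (Finset.mem_filter.1 hi).1
  have hneg := sum_le_of_nonneg_of_pairwise_le_abs_sub (s := s.filter fun i ↦ ¬ 0 ≤ t i) (t := -t)
    hδ hA hB (fun i hi ↦ neg_nonneg.2 (not_le.1 (Finset.mem_filter.1 hi).2).le)
    (fun i hi j hj hij ↦ by
      simpa only [Pi.neg_apply, neg_sub_neg, abs_sub_comm] using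
        hsep (Finset.mem_filter.1 hi).1 (Finset.mem_filter.1 hj).1 hij)
    (fun i hi ↦ hfA i (Finset.mem_filter.1 hi).1)
    fun i hi ↦ by simpa using hfB i (Finset.mem_filter.1 hi).1
  rw [← Finset.sum_filter_add_sum_filter_not s fun i ↦ 0 ≤ t i]
  linarith

end WellSpaced

section AnalyticLargeSieve

open scoped ComplexConjugate

variable {s : Finset UnitAddCircle} {δ : ℝ}

lemma sum_fejerKernel_sub_le (hδ : 0 < δ)
    (hs : (s : Set UnitAddCircle).Pairwise fun x y ↦ δ ≤ dist x y) (M : ℕ) (y : UnitAddCircle) :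
    ∑ x ∈ s, fejerKernel M (y - x) ≤ 2 * (M : ℝ) ^ 2 + δ⁻¹ ^ 2 := by
  choose t htx ht using fun x ↦ exists_coe_eq_abs_eq_norm (y - x)
  have hsep : (s : Set UnitAddCircle).Pairwise fun x z ↦ δ ≤ |t x - t z| := by
    intro x hx z hz hxz
    calc δ ≤ dist z x := hs hz hx hxz.symm
      _ = ‖((t x - t z : ℝ) : UnitAddCircle)‖ := by
        rw [AddCircle.coe_sub, htx, htx, sub_sub_sub_cancel_left, dist_eq_norm]
      _ ≤ |t x - t z| := QuotientAddGroup.norm_mk_le_norm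
  have hsum := sum_le_of_pairwise_le_abs_sub (f := fun x ↦ fejerKernel M (y - x)) (B := 1 / 4)
    hδ (sq_nonneg (M : ℝ)) (by norm_num) hsep (fun x _ ↦ fejerKernel_le_sq M _) fun x _ ↦ by
      rw [← sq_abs, ht]
      linarith [four_mul_norm_sq_mul_fejerKernel_le M (y - x)]
  have hπ : Real.pi ^ 2 / 3 * (1 / 4) ≤ 1 := by nlinarith [Real.pi_pos, Real.pi_lt_d2]
  calc _ ≤ _ := hsum
    _ = 2 * (M : ℝ) ^ 2 + Real.pi ^ 2 / 3 * (1 / 4) * δ⁻¹ ^ 2 := by rw [inv_pow]; ring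
    _ ≤ 2 * (M : ℝ) ^ 2 + 1 * δ⁻¹ ^ 2 := by gcongr
    _ = _ := by rw [one_mul]

lemma fourier_apply_sub {T : ℝ} (n : ℤ) (x y : AddCircle T) :
    (fourier n (x - y) : ℂ) = fourier n x * conj (fourier n y) := by
  rw [← fourier_neg, fourier_apply, fourier_apply, fourier_apply, sub_eq_add_neg, smul_add,
    AddCircle.toCircle_add, Circle.coe_mul, smul_neg, neg_smul]

lemma ofReal_norm_sq_sum_mul_fourier (c : UnitAddCircle → ℂ) (n : ℤ) :
    ((‖∑ x ∈ s, c x * fourier n x‖ ^ 2 : ℝ) : ℂ) =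
      ∑ x ∈ s, ∑ y ∈ s, c x * conj (c y) * fourier n (x - y) := by
  rw [Complex.ofReal_pow, ← Complex.mul_conj', map_sum, Finset.sum_mul_sum]
  refine Finset.sum_congr rfl fun x _ ↦ Finset.sum_congr rfl fun y _ ↦ ?_
  rw [map_mul, fourier_apply_sub]
  ring

lemma ofReal_sum_sum_norm_sq_sum_mul_fourier_sub (c : UnitAddCircle → ℂ) (M : ℕ) :
    ((∑ a ∈ Finset.range M, ∑ b ∈ Finset.range M,
      ‖∑ x ∈ s, c x * fourier (a - b : ℤ) x‖ ^ 2 : ℝ) : ℂ) =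
      ∑ x ∈ s, ∑ y ∈ s, c x * conj (c y) * (fejerKernel M (x - y) : ℂ) := by
  simp_rw [Complex.ofReal_sum, ofReal_norm_sq_sum_mul_fourier, ofReal_fejerKernel, Finset.mul_sum]
  rw [Finset.sum_congr rfl fun a _ ↦ Finset.sum_comm, Finset.sum_comm]
  refine Finset.sum_congr rfl fun x _ ↦ ?_
  rw [Finset.sum_congr rfl fun a _ ↦ Finset.sum_comm, Finset.sum_comm]

lemma sum_sum_norm_sq_sum_mul_fourier_sub_le (hδ : 0 < δ)
    (hs : (s : Set UnitAddCircle).Pairwise fun x y ↦ δ ≤ dist x y) (c : UnitAddCircle → ℂ)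
    (M : ℕ) :
    ∑ a ∈ Finset.range M, ∑ b ∈ Finset.range M, ‖∑ x ∈ s, c x * fourier (a - b : ℤ) x‖ ^ 2 ≤
      (2 * (M : ℝ) ^ 2 + δ⁻¹ ^ 2) * ∑ x ∈ s, ‖c x‖ ^ 2 := by
  refine (Complex.norm_of_nonneg (by positivity)).symm.trans_le ?_
  rw [ofReal_sum_sum_norm_sq_sum_mul_fourier_sub]
  exact norm_sum_sum_mul_conj_mul_le (fun x y ↦ fejerKernel_nonneg M (x - y))
    (fun x y ↦ by rw [← fejerKernel_neg, neg_sub])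
    (fun x _ ↦ sum_fejerKernel_sub_le hδ hs M x) c

lemma mul_sum_range_le_sum_sum_sub {D : ℤ → ℝ} (hD : ∀ n, 0 ≤ D n) (L N : ℕ) :
    L * ∑ n ∈ Finset.range N, D n ≤
      ∑ a ∈ Finset.range (N + L), ∑ b ∈ Finset.range (N + L), D (a - b) := by
  -- Each `n < N` is a difference `a - b` with `a, b < N + L` in at least `L` ways.
  rw [Finset.sum_comm]
  calc L * ∑ n ∈ Finset.range N, D n
      = ∑ _b ∈ Finset.range L, ∑ n ∈ Finset.range N, D n := by simp
    _ ≤ ∑ b ∈ Finset.range L, ∑ a ∈ Finset.range (N + L), D (a - b) := by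
      refine Finset.sum_le_sum fun b hb ↦ ?_
      calc ∑ n ∈ Finset.range N, D n
          = ∑ a ∈ (Finset.range N).image (· + b), D (a - b) := by
            rw [Finset.sum_image (add_left_injective b).injOn]
            simp
        _ ≤ ∑ a ∈ Finset.range (N + L), D (a - b) := by
            refine Finset.sum_le_sum_of_subset_of_nonneg (fun a ha ↦ ?_) fun _ _ _ ↦ hD _
            simp only [Finset.mem_image, Finset.mem_range] at ha hb ⊢
            omega
    _ ≤ ∑ b ∈ Finset.range (N + L), ∑ a ∈ Finset.range (N + L), D (a - b) :=
      Finset.sum_le_sum_of_subset_of_nonneg (Finset.range_subset_range.2 (by omega))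
        fun _ _ _ ↦ Finset.sum_nonneg fun _ _ ↦ hD _

lemma dual_large_sieve (hδ : 0 < δ)
    (hs : (s : Set UnitAddCircle).Pairwise fun x y ↦ δ ≤ dist x y) (c : UnitAddCircle → ℂ)
    (N : ℕ) :
    ∑ n ∈ Finset.range N, ‖∑ x ∈ s, c x * fourier (n : ℤ) x‖ ^ 2 ≤
      9 * (N + 1 + δ⁻¹) * ∑ x ∈ s, ‖c x‖ ^ 2 := by
  set L : ℕ := N + ⌈δ⁻¹⌉₊
  have hδL : δ⁻¹ ≤ L := (Nat.le_ceil _).trans (by simp [L])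
  have hL : 0 < (L : ℝ) := (inv_pos.2 hδ).trans_le hδL
  have hLle : (L : ℝ) ≤ N + 1 + δ⁻¹ := by
    have := (Nat.ceil_lt_add_one (inv_pos.2 hδ).le).le
    simp only [L, Nat.cast_add]
    linarith
  have hNL : ((N + L : ℕ) : ℝ) ≤ 2 * L := by simp [L]; linarith
  refine le_of_mul_le_mul_left ?_ hL
  calc L * ∑ n ∈ Finset.range N, ‖∑ x ∈ s, c x * fourier (n : ℤ) x‖ ^ 2
      ≤ (2 * ((N + L : ℕ) : ℝ) ^ 2 + δ⁻¹ ^ 2) * ∑ x ∈ s, ‖c x‖ ^ 2 :=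
        (mul_sum_range_le_sum_sum_sub (D := fun n ↦ ‖∑ x ∈ s, c x * fourier n x‖ ^ 2)
          (fun _ ↦ by positivity) L N).trans (sum_sum_norm_sq_sum_mul_fourier_sub_le hδ hs c _)
    _ ≤ (2 * (2 * L) ^ 2 + L ^ 2) * ∑ x ∈ s, ‖c x‖ ^ 2 := by gcongr
    _ = L * (9 * L * ∑ x ∈ s, ‖c x‖ ^ 2) := by ring
    _ ≤ L * (9 * (N + 1 + δ⁻¹) * ∑ x ∈ s, ‖c x‖ ^ 2) := by gcongr

theorem analytic_large_sieve (hδ : 0 < δ)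
    (hs : (s : Set UnitAddCircle).Pairwise fun x y ↦ δ ≤ dist x y) (a : ℕ → ℂ) (N : ℕ) :
    ∑ x ∈ s, ‖∑ n ∈ Finset.range N, a n * fourier (n : ℤ) x‖ ^ 2 ≤
      9 * (N + 1 + δ⁻¹) * ∑ n ∈ Finset.range N, ‖a n‖ ^ 2 :=
  sum_norm_sq_sum_mul_le_of_dual (by positivity) (fun c ↦ dual_large_sieve hδ hs c N) a

end AnalyticLargeSieve

section FareyPoints

lemma finite_setOf_isOfFinAddOrder_addOrderOf_le (R : ℕ) :
    {x : UnitAddCircle | IsOfFinAddOrder x ∧ addOrderOf x ≤ R}.Finite := by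
  refine ((Finset.Icc 1 R).finite_toSet.biUnion fun q hq ↦
    AddCircle.finite_setOfPred_addOrderOf_eq (1 : ℝ) (Finset.mem_Icc.1 hq).1).subset ?_
  intro x hx
  simpa using ⟨addOrderOf_pos_iff.2 hx.1, hx.2⟩

/-- The Farey points of order `R`: the fractions `b / q` modulo one with `1 ≤ q ≤ R` and `b`
coprime to `q`, described intrinsically as the torsion points of order at most `R`. -/
noncomputable def fareyPoints (R : ℕ) : Finset UnitAddCircle :=
  (finite_setOf_isOfFinAddOrder_addOrderOf_le R).toFinset

lemma mem_fareyPoints {R : ℕ} {x : UnitAddCircle} :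
    x ∈ fareyPoints R ↔ IsOfFinAddOrder x ∧ addOrderOf x ≤ R := by
  simp [fareyPoints]

lemma pairwise_fareyPoints_inv_sq_le_dist (R : ℕ) :
    (fareyPoints R : Set UnitAddCircle).Pairwise fun x y ↦ ((R : ℝ) ^ 2)⁻¹ ≤ dist x y := by
  intro x hx y hy hxy
  obtain ⟨hx, hxR⟩ := mem_fareyPoints.1 hx
  obtain ⟨hy, hyR⟩ := mem_fareyPoints.1 hy
  have hfin : IsOfFinAddOrder (x - y) := by
    simpa only [sub_eq_add_neg] using hx.add hy.neg
  have horder : addOrderOf (x - y) ≤ R ^ 2 := by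
    have hdvd : addOrderOf (x - y) ∣ addOrderOf x * addOrderOf y := by
      simpa [sub_eq_add_neg] using (AddCommute.all x (-y)).addOrderOf_add_dvd_mul_addOrderOf
    calc addOrderOf (x - y) ≤ addOrderOf x * addOrderOf y :=
          Nat.le_of_dvd (Nat.mul_pos hx.addOrderOf_pos hy.addOrderOf_pos) hdvd
      _ ≤ R ^ 2 := by rw [sq]; gcongr
  have hnorm : 1 ≤ (addOrderOf (x - y) : ℝ) * ‖x - y‖ := by
    simpa only [nsmul_eq_mul] using
      AddCircle.le_add_order_smul_norm_of_isOfFinAddOrder hfin (sub_ne_zero.2 hxy)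
  have hpos : 0 < (addOrderOf (x - y) : ℝ) := Nat.cast_pos.2 hfin.addOrderOf_pos
  calc ((R : ℝ) ^ 2)⁻¹ ≤ (addOrderOf (x - y) : ℝ)⁻¹ := by gcongr; exact_mod_cast horder
    _ ≤ ‖x - y‖ := (inv_le_iff_one_le_mul₀' hpos).2 hnorm
    _ = dist x y := (dist_eq_norm x y).symm

variable {q : ℕ} [NeZero q]

lemma addOrderOf_toAddCircle_unit (u : (ZMod q)ˣ) :
    addOrderOf (ZMod.toAddCircle (u : ZMod q)) = q := by
  rw [addOrderOf_injective _ (ZMod.toAddCircle_injective q), ← ZMod.natCast_zmod_val (u : ZMod q),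
    ZMod.addOrderOf_coe _ (NeZero.ne q), Nat.gcd_comm, ZMod.val_coe_unit_coprime u, Nat.div_one]

lemma sum_units_toAddCircle {M : Type*} [AddCommMonoid M] {t : Finset UnitAddCircle}
    (ht : ∀ x, x ∈ t ↔ addOrderOf x = q) (f : UnitAddCircle → M) :
    ∑ u : (ZMod q)ˣ, f (ZMod.toAddCircle (u : ZMod q)) = ∑ x ∈ t, f x := by
  refine Finset.sum_nbij (fun u : (ZMod q)ˣ ↦ ZMod.toAddCircle (u : ZMod q))
    (fun u _ ↦ (ht _).2 (addOrderOf_toAddCircle_unit u))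
    (((ZMod.toAddCircle_injective q).comp Units.val_injective).injOn) ?_ fun _ _ ↦ rfl
  intro x hx
  obtain ⟨b, -, hb, rfl⟩ := (AddCircle.addOrderOf_eq_pos_iff (NeZero.pos q)).1 ((ht x).1 hx)
  refine ⟨ZMod.unitOfCoprime b hb, Finset.mem_coe.2 (Finset.mem_univ _), ?_⟩
  simp only [ZMod.coe_unitOfCoprime, ZMod.toAddCircle_natCast, mul_one]

lemma stdAddChar_natCast_mul (n : ℕ) (b : ZMod q) :
    ZMod.stdAddChar ((n : ZMod q) * b) = fourier (n : ℤ) (ZMod.toAddCircle b) := by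
  rw [fourier_apply, ← map_zsmul, zsmul_eq_mul, Int.cast_natCast, ZMod.stdAddChar_apply]
  rfl

end FareyPoints

section CharacterSums

open scoped ComplexConjugate

lemma sum_units_mulChar_mul {R R' : Type*} [CommMonoid R] [Fintype R] [DecidableEq R]
    [CommRing R'] (χ : MulChar R R') (f : R → R') : ∑ u : Rˣ, χ u * f u = ∑ b, χ b * f b := by
  refine Finset.sum_of_injOn (fun u : Rˣ ↦ (u : R)) Units.val_injective.injOn
    (by simp) (fun b _ hb ↦ ?_) fun _ _ ↦ rfl
  rw [χ.map_nonunit, zero_mul]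
  rintro ⟨u, rfl⟩
  exact hb ⟨u, by simp, rfl⟩

variable {q : ℕ} [NeZero q]

lemma sum_dirichletCharacter_mul_conj (b : ZMod q) (u : (ZMod q)ˣ) :
    ∑ χ : DirichletCharacter ℂ q, χ b * conj (χ u) = if u = b then (q.totient : ℂ) else 0 := by
  rw [← DirichletCharacter.sum_char_inv_mul_char_eq ℂ u.isUnit b]
  refine Finset.sum_congr rfl fun χ _ ↦ ?_
  rw [starRingEnd_apply, MulChar.star_apply', MulChar.inv_apply, Ring.inverse_unit,
    ZMod.inv_coe_unit, mul_comm]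

lemma sum_norm_sq_sum_dirichletCharacter_mul (f : (ZMod q)ˣ → ℂ) :
    ∑ χ : DirichletCharacter ℂ q, ‖∑ u : (ZMod q)ˣ, χ u * f u‖ ^ 2 =
      q.totient * ∑ u, ‖f u‖ ^ 2 := by
  rw [← Complex.ofReal_inj]
  push_cast
  have hexpand (χ : DirichletCharacter ℂ q) : (‖∑ u : (ZMod q)ˣ, χ u * f u‖ : ℂ) ^ 2 =
      ∑ u : (ZMod q)ˣ, ∑ v : (ZMod q)ˣ, f u * conj (f v) * (χ u * conj (χ v)) := by
    rw [← Complex.mul_conj', map_sum, Finset.sum_mul_sum]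
    simp only [map_mul, mul_mul_mul_comm, mul_comm (f _ * _)]
  simp_rw [hexpand]
  rw [Finset.sum_comm, Finset.mul_sum]
  refine Finset.sum_congr rfl fun u _ ↦ ?_
  rw [Finset.sum_comm]
  simp_rw [← Finset.mul_sum, sum_dirichletCharacter_mul_conj, Units.val_inj, ← Complex.mul_conj']
  simp [mul_comm]

section GaussSum

variable {R : Type*} [CommRing R] [IsDomain R] {χ : DirichletCharacter R q}

lemma gaussSum_mul_gaussSum_inv_of_isPrimitive (hχ : χ.IsPrimitive) {e : AddChar (ZMod q) R}
    (he : e.IsPrimitive) : gaussSum χ e * gaussSum χ⁻¹ e⁻¹ = q := by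
  calc gaussSum χ e * gaussSum χ⁻¹ e⁻¹
      = ∑ n : ZMod q, gaussSum χ (e.mulShift n) * e (-n) := by
        rw [gaussSum.eq_1 χ⁻¹, Finset.mul_sum]
        refine Finset.sum_congr rfl fun n _ ↦ ?_
        rw [gaussSum_mulShift_of_isPrimitive _ hχ, AddChar.inv_apply]
        ring
    _ = ∑ b : ZMod q, χ b * ∑ n : ZMod q, e (n * (b - 1)) := by
        simp_rw [gaussSum, Finset.sum_mul, Finset.mul_sum]
        rw [Finset.sum_comm]
        refine Finset.sum_congr rfl fun b _ ↦ Finset.sum_congr rfl fun n _ ↦ ?_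
        rw [AddChar.mulShift_apply, mul_assoc, ← AddChar.map_add_eq_mul]
        ring_nf
    _ = q := by
        simp_rw [AddChar.sum_mulShift _ he, sub_eq_zero]
        simp [ZMod.card]

lemma gaussSum_mul_sum_mul_inv (hχ : χ.IsPrimitive) (e : AddChar (ZMod q) R) {ι : Type*}
    (s : Finset ι) (a : ι → R) (n : ι → ZMod q) :
    gaussSum χ e * ∑ i ∈ s, a i * χ⁻¹ (n i) =
      ∑ b, χ b * ∑ i ∈ s, a i * e (n i * b) := by
  simp_rw [Finset.mul_sum]
  rw [Finset.sum_comm]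
  refine Finset.sum_congr rfl fun i _ ↦ ?_
  rw [mul_left_comm, mul_comm (gaussSum _ _), ← gaussSum_mulShift_of_isPrimitive _ hχ, gaussSum,
    Finset.mul_sum]
  refine Finset.sum_congr rfl fun b _ ↦ ?_
  rw [AddChar.mulShift_apply]
  ring

end GaussSum

variable {χ : DirichletCharacter ℂ q}

lemma norm_sq_gaussSum_of_isPrimitive (hχ : χ.IsPrimitive) {e : AddChar (ZMod q) ℂ}
    (he : e.IsPrimitive) : ‖gaussSum χ e‖ ^ 2 = q := by
  rw [← Complex.ofReal_inj, Complex.ofReal_pow, ← Complex.mul_conj', starRingEnd_apply,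
    star_gaussSum_eq, gaussSum_mul_gaussSum_inv_of_isPrimitive hχ he, Complex.ofReal_natCast]

lemma natCast_mul_norm_sq_sum_mul_dirichletCharacter (hχ : χ.IsPrimitive) (s : Finset ℕ)
    (a : ℕ → ℂ) :
    q * ‖∑ n ∈ s, a n * χ n‖ ^ 2 = ‖∑ u : (ZMod q)ˣ, χ u *
      ∑ n ∈ s, conj (a n) * fourier (n : ℤ) (ZMod.toAddCircle (u : ZMod q))‖ ^ 2 := by
  simp_rw [← stdAddChar_natCast_mul]
  rw [sum_units_mulChar_mul χ fun b ↦ ∑ n ∈ s, conj (a n) * ZMod.stdAddChar ((n : ZMod q) * b),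
    ← gaussSum_mul_sum_mul_inv hχ, norm_mul, mul_pow,
    norm_sq_gaussSum_of_isPrimitive hχ (ZMod.isPrimitive_stdAddChar q), ← Complex.norm_conj]
  simp only [map_sum, map_mul, starRingEnd_apply (χ _), MulChar.star_apply']

lemma sum_isPrimitive_norm_sq_le (s : Finset ℕ) (a : ℕ → ℂ) :
    (q / q.totient : ℝ) * ∑ᶠ χ ∈ {χ : DirichletCharacter ℂ q | χ.IsPrimitive},
      ‖∑ n ∈ s, a n * χ n‖ ^ 2 ≤
    ∑ u : (ZMod q)ˣ,
      ‖∑ n ∈ s, conj (a n) * fourier (n : ℤ) (ZMod.toAddCircle (u : ZMod q))‖ ^ 2 := by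
  have hφ : (0 : ℝ) < q.totient := Nat.cast_pos.2 (Nat.totient_pos.2 (NeZero.pos q))
  rw [div_mul_eq_mul_div, div_le_iff₀' hφ, ← sum_norm_sq_sum_dirichletCharacter_mul,
    finsum_mem_eq_finite_toFinset_sum _ (Set.toFinite _), Finset.mul_sum]
  refine (Finset.sum_congr rfl fun χ hχ ↦ ?_).trans_le (Finset.sum_le_sum_of_subset_of_nonneg
    (Finset.subset_univ _) fun _ _ _ ↦ by positivity)
  exact natCast_mul_norm_sq_sum_mul_dirichletCharacter (by simpa using hχ) s a

end CharacterSums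

theorem multiplicative_large_sieve (R : ℕ) (a : ℕ → ℂ) (N : ℕ) :
    ∑ q ∈ Finset.Icc 1 R, (q / q.totient : ℝ) *
      ∑ᶠ χ ∈ {χ : DirichletCharacter ℂ q | χ.IsPrimitive},
        ‖∑ n ∈ Finset.range N, a n * χ n‖ ^ 2 ≤
      9 * (N + 1 + (R : ℝ) ^ 2) * ∑ n ∈ Finset.range N, ‖a n‖ ^ 2 := by
  rcases R.eq_zero_or_pos with rfl | hR
  · simp only [zero_lt_one, Finset.Icc_eq_empty_of_lt, Finset.sum_empty]
    positivity
  have hsieve := analytic_large_sieve (by positivity) (pairwise_fareyPoints_inv_sq_le_dist R)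
    (fun n ↦ starRingEnd ℂ (a n)) N
  rw [← Finset.sum_fiberwise_of_maps_to (g := addOrderOf) (t := Finset.Icc 1 R) fun x hx ↦ by
    obtain ⟨hfin, hle⟩ := mem_fareyPoints.1 hx
    exact Finset.mem_Icc.2 ⟨hfin.addOrderOf_pos, hle⟩] at hsieve
  simp only [Complex.norm_conj, inv_inv] at hsieve
  refine (Finset.sum_le_sum fun q hq ↦ ?_).trans hsieve
  obtain ⟨hq1, hqR⟩ := Finset.mem_Icc.1 hq
  have : NeZero q := NeZero.of_pos hq1
  refine (sum_isPrimitive_norm_sq_le _ a).trans_eq (sum_units_toAddCircle (fun x ↦ ?_)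
    fun x ↦ ‖∑ n ∈ Finset.range N, starRingEnd ℂ (a n) * fourier (n : ℤ) x‖ ^ 2)
  rw [Finset.mem_filter, mem_fareyPoints, and_iff_right_iff_imp]
  rintro rfl
  exact ⟨addOrderOf_pos_iff.1 hq1, hqR⟩

section PrimeIdealPowers

lemma sum_log_absNorm_le {S : Type*} [CommRing S] [IsDedekindDomain S] [Module.Free ℤ S]
    [Module.Finite ℤ S] {p : ℕ} (hp : p ≠ 0) {s : Finset (Ideal S)}
    (hs : ∀ 𝔭 ∈ s, 𝔭.IsPrime ∧ 𝔭 ≠ ⊥ ∧ (p : S) ∈ 𝔭) :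
    ∑ 𝔭 ∈ s, Real.log (absNorm 𝔭) ≤ Module.finrank ℤ S * Real.log p := by
  have hdvd : ∏ 𝔭 ∈ s, 𝔭 ∣ span {(p : S)} :=
    Finset.prod_primes_dvd _ (fun 𝔭 h ↦ prime_of_isPrime (hs 𝔭 h).2.1 (hs 𝔭 h).1)
      fun 𝔭 h ↦ dvd_span_singleton.2 (hs 𝔭 h).2.2
  have hnorm : ∏ 𝔭 ∈ s, absNorm 𝔭 ∣ p ^ Module.finrank ℤ S := by
    rw [← map_prod, ← absNorm_span_natCast]
    exact map_dvd absNorm hdvd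
  have hne (𝔭) (h : 𝔭 ∈ s) : (absNorm 𝔭 : ℝ) ≠ 0 :=
    Nat.cast_ne_zero.2 (absNorm_eq_zero_iff.not.2 (hs 𝔭 h).2.1)
  rw [← Real.log_prod hne, ← Real.log_pow]
  refine Real.log_le_log (Finset.prod_pos fun 𝔭 h ↦ (Nat.cast_nonneg _).lt_of_ne' (hne 𝔭 h)) ?_
  exact_mod_cast Nat.le_of_dvd (pow_pos (Nat.pos_of_ne_zero hp) _) hnorm

namespace IsPrimeIdealPower

variable {K : Type*} [Field K] [NumberField K] {𝔞 𝔟 : Ideal (𝓞 K)}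

lemma isPrime_radical (h : IsPrimeIdealPower 𝔞) : 𝔞.radical.IsPrime := by
  obtain ⟨𝔭, m, h𝔭, -, hm, rfl⟩ := h
  rwa [radical_pow _ (Nat.one_le_iff_ne_zero.1 hm), h𝔭.radical]

lemma radical_ne_bot (h : IsPrimeIdealPower 𝔞) : 𝔞.radical ≠ ⊥ := by
  obtain ⟨𝔭, m, h𝔭, h𝔭0, hm, rfl⟩ := h
  rwa [radical_pow _ (Nat.one_le_iff_ne_zero.1 hm), h𝔭.radical]

lemma exists_radical_pow_eq (h : IsPrimeIdealPower 𝔞) : ∃ m ≠ 0, 𝔞.radical ^ m = 𝔞 := by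
  obtain ⟨𝔭, m, h𝔭, -, hm, rfl⟩ := h
  have hm0 := Nat.one_le_iff_ne_zero.1 hm
  exact ⟨m, hm0, by rw [radical_pow _ hm0, h𝔭.radical]⟩

lemma eq_of_radical_eq_of_absNorm_eq (h𝔞 : IsPrimeIdealPower 𝔞) (h𝔟 : IsPrimeIdealPower 𝔟)
    (hrad : 𝔞.radical = 𝔟.radical) (hnorm : absNorm 𝔞 = absNorm 𝔟) : 𝔞 = 𝔟 := by
  obtain ⟨m, -, hm⟩ := h𝔞.exists_radical_pow_eq
  obtain ⟨k, -, hk⟩ := h𝔟.exists_radical_pow_eq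
  have h0 : absNorm 𝔟.radical ≠ 0 := absNorm_eq_zero_iff.not.2 h𝔟.radical_ne_bot
  have h1 : absNorm 𝔟.radical ≠ 1 := absNorm_eq_one_iff.not.2 h𝔟.isPrime_radical.ne_top
  rw [← hm, ← hk, hrad, map_pow, map_pow] at hnorm
  rw [← hm, ← hk, hrad, Nat.pow_right_injective (by lia : 2 ≤ absNorm 𝔟.radical) hnorm]

lemma isPrimePow_absNorm (h : IsPrimeIdealPower 𝔞) : IsPrimePow (absNorm 𝔞) := by
  obtain ⟨m, hm, hpow⟩ := h.exists_radical_pow_eq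
  have := h.isPrime_radical.isMaximal h.radical_ne_bot
  obtain ⟨p, f, hf, -, hp, hpf⟩ := exists_prime_and_absNorm_eq_pow 𝔞.radical
  rw [← hpow, map_pow, hpf]
  exact (hp.isPrimePow.pow hf.ne').pow hm

end IsPrimeIdealPower

end PrimeIdealPowers

section NormVonMangoldt

open ArithmeticFunction (vonMangoldt)

variable (K : Type*) [Field K] [NumberField K]

/-- The sum of `Λ_K` over the ideals of norm `n`: the coefficient at `n` of the Dirichlet series of
minus the logarithmic derivative of `ζ_K`, through which `ψ_K` becomes a sum over integers. -/
noncomputable def normVonMangoldt (n : ℕ) : ℝ :=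
  ∑ 𝔞 ∈ (finite_setOfPred_absNorm_eq (S := 𝓞 K) n).toFinset, LambdaK K 𝔞

lemma LambdaK_nonneg (𝔞 : Ideal (𝓞 K)) : 0 ≤ LambdaK K 𝔞 := by
  unfold LambdaK
  split_ifs
  exacts [Real.log_natCast_nonneg _, le_rfl]

lemma normVonMangoldt_nonneg (n : ℕ) : 0 ≤ normVonMangoldt K n :=
  Finset.sum_nonneg fun 𝔞 _ ↦ LambdaK_nonneg K 𝔞

lemma normVonMangoldt_le (n : ℕ) :
    normVonMangoldt K n ≤ Module.finrank ℚ K * vonMangoldt n := by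
  set s := {𝔞 ∈ (finite_setOfPred_absNorm_eq (S := 𝓞 K) n).toFinset | IsPrimeIdealPower 𝔞}
  have hmem {𝔞 : Ideal (𝓞 K)} (h : 𝔞 ∈ s) : IsPrimeIdealPower 𝔞 ∧ absNorm 𝔞 = n := by
    simpa [s, and_comm] using h
  have hsum : normVonMangoldt K n = ∑ 𝔞 ∈ s, Real.log (absNorm 𝔞.radical) :=
    (Finset.sum_filter ..).symm
  rcases s.eq_empty_or_nonempty with h | ⟨𝔟, h𝔟⟩
  · rw [hsum, h, Finset.sum_empty]
    exact mul_nonneg (Nat.cast_nonneg _) ArithmeticFunction.vonMangoldt_nonneg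
  obtain ⟨p, k, hp, hk, hn⟩ := (isPrimePow_nat_iff n).1 <|
    (hmem h𝔟).2 ▸ (hmem h𝔟).1.isPrimePow_absNorm
  have hinj : Set.InjOn (fun 𝔞 : Ideal (𝓞 K) ↦ 𝔞.radical) s := fun 𝔞 h𝔞 𝔟 h𝔟 hrad ↦
    (hmem h𝔞).1.eq_of_radical_eq_of_absNorm_eq (hmem h𝔟).1 hrad
      ((hmem h𝔞).2.trans (hmem h𝔟).2.symm)
  rw [hsum, ← Finset.sum_image (f := fun 𝔭 : Ideal (𝓞 K) ↦ Real.log (absNorm 𝔭)) hinj, ← hn,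
    ArithmeticFunction.vonMangoldt_apply_pow hk.ne', ArithmeticFunction.vonMangoldt_apply_prime hp,
    ← RingOfIntegers.rank K]
  refine sum_log_absNorm_le hp.ne_zero fun 𝔭 h𝔭 ↦ ?_
  obtain ⟨𝔞, h𝔞, rfl⟩ := Finset.mem_image.1 h𝔭
  obtain ⟨hpow, hN⟩ := hmem h𝔞
  refine ⟨hpow.isPrime_radical, hpow.radical_ne_bot, k, ?_⟩
  rw [← Nat.cast_pow, hn, ← hN]
  exact absNorm_mem 𝔞

lemma psiKChi_eq_sum_normVonMangoldt {x : ℝ} (hx : 0 ≤ x) {q : ℕ} (χ : DirichletCharacter ℂ q) :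
    psiKChi K x χ = ∑ n ∈ Finset.range (⌊x⌋₊ + 1), (normVonMangoldt K n : ℂ) * χ n := by
  have hmem (𝔞 : Ideal (𝓞 K)) : (absNorm 𝔞 : ℝ) ≤ x ↔ absNorm 𝔞 ≤ ⌊x⌋₊ :=
    (Nat.le_floor_iff hx).symm
  simp only [psiKChi, hmem]
  rw [tsum_eq_sum (s := (finite_setOfPred_absNorm_le (S := 𝓞 K) ⌊x⌋₊).toFinset)
      fun 𝔞 h𝔞 ↦ if_neg (by simpa using h𝔞),
    ← Finset.sum_fiberwise_of_maps_to (g := fun 𝔞 ↦ absNorm 𝔞)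
      (t := Finset.range (⌊x⌋₊ + 1)) fun 𝔞 h𝔞 ↦ by simpa [Nat.lt_succ_iff] using h𝔞]
  refine Finset.sum_congr rfl fun n hn ↦ ?_
  have hn : n ≤ ⌊x⌋₊ := Nat.lt_succ_iff.1 (Finset.mem_range.1 hn)
  rw [normVonMangoldt, Complex.ofReal_sum, Finset.sum_mul]
  refine Finset.sum_congr ?_ fun 𝔞 h𝔞 ↦ ?_
  · ext 𝔞
    simp only [Finset.mem_filter, Set.Finite.mem_toFinset, Set.mem_ofPred_eq]
    exact and_iff_right_of_imp fun h ↦ h.trans_le hn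
  · have h𝔞 : absNorm 𝔞 = n := by simpa using h𝔞
    rw [if_pos (h𝔞.trans_le hn), h𝔞, mul_comm]

lemma sum_vonMangoldt_sq_le {x : ℝ} (hx : 1 ≤ x) :
    ∑ n ∈ Finset.range (⌊x⌋₊ + 1), vonMangoldt n ^ 2 ≤ (Real.log 4 + 4) * x * Real.log x := by
  have hlog : 0 ≤ Real.log x := Real.log_nonneg hx
  have hle (n) (hn : n ∈ Finset.range (⌊x⌋₊ + 1)) : vonMangoldt n ≤ Real.log x := by
    rcases n.eq_zero_or_pos with rfl | hn0
    · simpa using hlog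
    refine ArithmeticFunction.vonMangoldt_le_log.trans (Real.log_le_log (by positivity) ?_)
    exact (Nat.le_floor_iff (by positivity)).1 (Nat.lt_succ_iff.1 (Finset.mem_range.1 hn))
  calc ∑ n ∈ Finset.range (⌊x⌋₊ + 1), vonMangoldt n ^ 2
      ≤ ∑ n ∈ Finset.range (⌊x⌋₊ + 1), vonMangoldt n * Real.log x :=
        Finset.sum_le_sum fun n hn ↦ (sq _).trans_le <|
          mul_le_mul_of_nonneg_left (hle n hn) ArithmeticFunction.vonMangoldt_nonneg
    _ = Chebyshev.psi x * Real.log x := by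
        rw [← Finset.sum_mul, Chebyshev.psi_eq_sum_Icc, ← Nat.range_succ_eq_Icc_zero]
    _ ≤ (Real.log 4 + 4) * x * Real.log x := by
        gcongr
        exact Chebyshev.psi_le_const_mul_self (by positivity)

lemma sum_normVonMangoldt_sq_le {x : ℝ} (hx : 1 ≤ x) :
    ∑ n ∈ Finset.range (⌊x⌋₊ + 1), normVonMangoldt K n ^ 2 ≤
      (Module.finrank ℚ K : ℝ) ^ 2 * ((Real.log 4 + 4) * x * Real.log x) := by
  calc ∑ n ∈ Finset.range (⌊x⌋₊ + 1), normVonMangoldt K n ^ 2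
      ≤ ∑ n ∈ Finset.range (⌊x⌋₊ + 1), (Module.finrank ℚ K * vonMangoldt n) ^ 2 := by
        gcongr with n
        exacts [normVonMangoldt_nonneg K n, normVonMangoldt_le K n]
    _ ≤ (Module.finrank ℚ K : ℝ) ^ 2 * ((Real.log 4 + 4) * x * Real.log x) := by
        simp_rw [mul_pow, ← Finset.mul_sum]
        gcongr
        exact sum_vonMangoldt_sq_le hx

end NormVonMangoldt

theorem large_sieve_psiK_general (K : Type*) [Field K] [NumberField K] {x Q : ℝ} (hx : 1 ≤ x)
    (hQ : 0 ≤ Q) :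
    ∑ q ∈ Finset.Icc 1 ⌊Q⌋₊, (q / q.totient : ℝ) *
        ∑ᶠ χ ∈ {χ : DirichletCharacter ℂ q | χ.IsPrimitive}, ‖psiKChi K x χ‖ ^ 2 ≤
      27 * (Real.log 4 + 4) * (Module.finrank ℚ K : ℝ) ^ 2 * ((x + Q ^ 2) * x * Real.log x) := by
  have hx0 : 0 ≤ x := by positivity
  have hlength : ((⌊x⌋₊ + 1 : ℕ) : ℝ) + 1 + (⌊Q⌋₊ : ℝ) ^ 2 ≤ 3 * (x + Q ^ 2) := by
    have hfloor : (⌊Q⌋₊ : ℝ) ^ 2 ≤ Q ^ 2 := by gcongr; exact Nat.floor_le hQ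
    push_cast
    linarith [Nat.floor_le hx0, sq_nonneg Q]
  simp_rw [psiKChi_eq_sum_normVonMangoldt K hx0]
  calc _ ≤ 9 * (((⌊x⌋₊ + 1 : ℕ) : ℝ) + 1 + (⌊Q⌋₊ : ℝ) ^ 2) *
        ∑ n ∈ Finset.range (⌊x⌋₊ + 1), ‖(normVonMangoldt K n : ℂ)‖ ^ 2 :=
        multiplicative_large_sieve ..
    _ ≤ 9 * (3 * (x + Q ^ 2)) *
        ((Module.finrank ℚ K : ℝ) ^ 2 * ((Real.log 4 + 4) * x * Real.log x)) := by
        simp_rw [Complex.norm_real, Real.norm_eq_abs, sq_abs]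
        gcongr
        exact sum_normVonMangoldt_sq_le K hx
    _ = _ := by ring

/-- **Large sieve bound (Lemma 1).**
`∑_{q ≤ Q} (q/φ(q)) ∑_{χ primitive mod q} |ψ_K(x, χ∘N)|² ≪ (x + Q²) x log x`,
the implied constant depending only on `K`. -/
theorem large_sieve_psiK (K : Type*) [Field K] [NumberField K] [IsGalois ℚ K] :
    ∃ C : ℝ, 0 < C ∧ ∀ x Q : ℝ, 2 ≤ x → 1 ≤ Q →
      ∑ q ∈ Finset.Icc 1 ⌊Q⌋₊, (q / q.totient : ℝ) *
          ∑ᶠ χ ∈ {χ : DirichletCharacter ℂ q | χ.IsPrimitive}, ‖psiKChi K x χ‖ ^ 2 ≤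
        C * ((x + Q ^ 2) * x * Real.log x) := by
  have hfinrank : 0 < Module.finrank ℚ K := Module.finrank_pos
  exact ⟨27 * (Real.log 4 + 4) * (Module.finrank ℚ K : ℝ) ^ 2, by positivity,
    fun x Q hx hQ ↦ large_sieve_psiK_general K (one_le_two.trans hx) (zero_le_one.trans hQ)⟩
end

section
/- For every integer q ≥ 1 and every x > 0, ∑_{a ∈ G_q} (ψ_K(x;q,a) − x/φ_K(q))² = (1/φ(q)) ∑_{χ mod q} |ψ'_K(x, χ∘N)|², where the right-hand sum is over all Dirichlet characters χ modulo q and φ is Euler's totient function. -/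
/-!
Setting: `K` is a number field, Galois over `ℚ`, with ring of integers `𝓞 K`.
We formalize the objects from Smith, "A generalization of the
Barban-Davenport-Halberstam Theorem to number fields".
-/

open NumberField Ideal
open scoped Classical BigOperators

/-!
If `𝔭 ∤ q`, a Frobenius element of `K(ζ_q)/K` at `𝔭` raises `ζ_q` to the power `N𝔭`, so the norm of
a prime ideal power that is a unit modulo `q` lies in `G_q`. Hence `u ↦ ψ_K(x; q, u)` is supported
on `G_q` within `(ℤ/qℤ)ˣ`, and since the sum of a character `χ` over `G_q` is `φ_K(q)` or `0`
according to whether `χ` is trivial there, `χ ↦ ψ'_K(x, χ∘N)` is the Fourier transform of the error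
term `ψ_K(x; q, u) − x / φ_K(q)` extended by zero from `G_q`. The identity is then Parseval's.
-/

section MulChar

variable {M R : Type*} [CommMonoid M]

theorem mulChar_apply_eq_sum_units [CommSemiring R] [Fintype Mˣ] (χ : MulChar M R) (m : M) :
    χ m = ∑ u : Mˣ, if m = u then χ u else 0 := by
  by_cases hm : IsUnit m
  · obtain ⟨v, rfl⟩ := hm
    simp [Units.val_inj]
  · rw [χ.map_nonunit hm, Finset.sum_eq_zero]
    rintro u -
    exact if_neg fun h : m = u ↦ hm (h ▸ u.isUnit)

theorem sum_mulChar_subgroup_eq [CommRing R] [IsDomain R] (χ : MulChar M R) (H : Subgroup Mˣ)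
    [Fintype H] [Decidable (∀ a ∈ H, χ (a : M) = 1)] :
    ∑ h : H, χ (h : Mˣ) = if ∀ a ∈ H, χ (a : M) = 1 then (Nat.card H : R) else 0 := by
  have hone : (χ.toMonoidHom.comp (Units.coeHom M)).comp H.subtype = 1 ↔
      ∀ a ∈ H, χ (a : M) = 1 := by
    simp [MonoidHom.ext_iff]
  have hsum := sum_hom_units ((χ.toMonoidHom.comp (Units.coeHom M)).comp H.subtype)
  simpa [hone] using hsum

theorem sum_mulChars_apply_unit [Finite M] [CommRing R] [IsDomain R]
    [HasEnoughRootsOfUnity R (Monoid.exponent Mˣ)] [Fintype (MulChar M R)] (u : Mˣ) :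
    ∑ χ : MulChar M R, χ u = if u = 1 then (Nat.card Mˣ : R) else 0 := by
  split_ifs with hu
  · simp [hu, ← MulChar.card_eq_card_units_of_hasEnoughRootsOfUnity M R]
  · obtain ⟨χ, hχ⟩ := MulChar.exists_apply_ne_one_of_hasEnoughRootsOfUnity M R
      (mt Units.val_eq_one.mp hu)
    refine eq_zero_of_mul_eq_self_left hχ ?_
    simp only [Finset.mul_sum, ← MulChar.mul_apply]
    exact Fintype.sum_bijective _ (Group.mulLeft_bijective χ) _ _ fun _ ↦ rfl

variable {𝕜 : Type*} [RCLike 𝕜]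

theorem conj_mulChar_apply_unit [Finite Mˣ] (χ : MulChar M 𝕜) (u : Mˣ) :
    starRingEnd 𝕜 (χ u) = χ (u⁻¹ : Mˣ) := by
  have hnorm : ‖χ u‖ = 1 :=
    ((χ.toMonoidHom.comp (Units.coeHom M)).isOfFinOrder (isOfFinOrder_of_finite u)).norm_eq_one
  rw [← RCLike.inv_eq_conj hnorm]
  exact inv_eq_of_mul_eq_one_right (by rw [← map_mul, Units.mul_inv, map_one])

theorem sum_mulChars_conj_mul [Finite M] [HasEnoughRootsOfUnity 𝕜 (Monoid.exponent Mˣ)]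
    [Fintype (MulChar M 𝕜)] (u v : Mˣ) :
    ∑ χ : MulChar M 𝕜, starRingEnd 𝕜 (χ u) * χ v = if u = v then (Nat.card Mˣ : 𝕜) else 0 := by
  simp_rw [conj_mulChar_apply_unit, ← map_mul, ← Units.val_mul, sum_mulChars_apply_unit,
    inv_mul_eq_one]

theorem sum_mulChars_norm_sq_sum_mul [Finite M] [HasEnoughRootsOfUnity 𝕜 (Monoid.exponent Mˣ)]
    [Fintype (MulChar M 𝕜)] [Fintype Mˣ] (f : Mˣ → 𝕜) :
    ∑ χ : MulChar M 𝕜, ‖∑ u : Mˣ, χ u * f u‖ ^ 2 = Nat.card Mˣ * ∑ u, ‖f u‖ ^ 2 := by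
  apply RCLike.ofReal_injective (K := 𝕜)
  push_cast
  calc ∑ χ : MulChar M 𝕜, (‖∑ u : Mˣ, χ u * f u‖ : 𝕜) ^ 2
      = ∑ χ : MulChar M 𝕜, ∑ u : Mˣ, ∑ v : Mˣ,
          starRingEnd 𝕜 (χ u) * χ v * (starRingEnd 𝕜 (f u) * f v) := by
        simp_rw [← RCLike.conj_mul, map_sum, map_mul, Finset.sum_mul_sum, mul_mul_mul_comm]
    _ = ∑ u : Mˣ, ∑ v : Mˣ,
          (∑ χ : MulChar M 𝕜, starRingEnd 𝕜 (χ u) * χ v) * (starRingEnd 𝕜 (f u) * f v) := by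
        simp_rw [Finset.sum_mul]
        rw [Finset.sum_comm]
        exact Finset.sum_congr rfl fun u _ ↦ Finset.sum_comm
    _ = Nat.card Mˣ * ∑ u : Mˣ, (‖f u‖ : 𝕜) ^ 2 := by
        simp_rw [sum_mulChars_conj_mul, ite_mul, zero_mul, Finset.sum_ite_eq, Finset.mem_univ,
          if_true, RCLike.conj_mul, Finset.mul_sum]

end MulChar

section Frobenius

theorem exists_smul_eq_pow_card_quotient {A B : Type*} (G : Type*) [CommRing A] [CommRing B]
    [IsDomain B] [Algebra A B] [FaithfulSMul A B] [Group G] [Finite G] [MulSemiringAction G B]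
    [SMulCommClass G A B] [Algebra.IsInvariant A B G] (𝔭 : Ideal A) [𝔭.IsPrime] [Finite (A ⧸ 𝔭)]
    {n : ℕ} {ζ : B} (hζ : ζ ^ n = 1) (hn : (n : A) ∉ 𝔭) :
    ∃ σ : G, σ • ζ = ζ ^ Nat.card (A ⧸ 𝔭) := by
  have : 𝔭.IsMaximal := Ideal.Quotient.maximal_of_isField 𝔭 (Finite.isField_of_domain (A ⧸ 𝔭))
  have := Algebra.IsInvariant.isIntegral A B G
  obtain ⟨Q, hQ, hQ𝔭⟩ := Ideal.exists_maximal_ideal_liesOver_of_isIntegral (S := B) 𝔭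
  let := Ideal.Quotient.field 𝔭
  let := Ideal.Quotient.field Q
  -- The finite field `A ⧸ 𝔭` is perfect, so `B ⧸ Q` is separable over it, hence finite.
  have := Ideal.Quotient.finite_of_isInvariant G 𝔭 Q
  have : Finite (B ⧸ Q) := Module.finite_of_finite (A ⧸ 𝔭)
  obtain ⟨σ, hσ⟩ := IsArithFrobAt.exists_of_isInvariant A G Q
  have hnQ : (n : B) ∉ Q := by
    rwa [hQ𝔭.over, Ideal.mem_comap, map_natCast] at hn
  refine ⟨σ, ?_⟩
  rw [hQ𝔭.over]
  exact AlgHom.IsArithFrobAt.apply_of_pow_eq_one hσ hζ hnQ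

theorem exists_algEquiv_apply_eq_pow_absNorm {K L : Type*} [Field K] [NumberField K] [Field L]
    [NumberField L] [Algebra K L] [IsGalois K L] (𝔭 : Ideal (𝓞 K)) [𝔭.IsPrime] (h𝔭 : 𝔭 ≠ ⊥)
    {n : ℕ} {ζ : L} (hζ : ζ ^ n = 1) (hn : (n : 𝓞 K) ∉ 𝔭) :
    ∃ σ : L ≃ₐ[K] L, σ ζ = ζ ^ absNorm 𝔭 := by
  have : Finite (𝓞 K ⧸ 𝔭) := Ideal.finiteQuotientOfFreeOfNeBot 𝔭 h𝔭
  have : IsGaloisGroup (L ≃ₐ[K] L) (𝓞 K) (𝓞 L) :=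
    IsGaloisGroup.of_isFractionRing _ (𝓞 K) (𝓞 L) K L
  have hn0 : n ≠ 0 := by
    rintro rfl
    simp at hn
  obtain ⟨ζ, rfl⟩ : ∃ ζ' : 𝓞 L, algebraMap (𝓞 L) L ζ' = ζ :=
    ⟨⟨ζ, IsIntegral.of_pow (Nat.pos_of_ne_zero hn0) (hζ ▸ isIntegral_one)⟩, rfl⟩
  obtain ⟨σ, hσ⟩ := exists_smul_eq_pow_card_quotient (L ≃ₐ[K] L) 𝔭 (ζ := ζ)
    (by exact_mod_cast hζ) hn
  exact ⟨σ, (congrArg (algebraMap (𝓞 L) L) hσ).trans (map_pow _ _ _)⟩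

theorem coe_autToPow_eq_of_apply_eq_pow {R S : Type*} [CommRing R] [CommRing S] [IsDomain S]
    [Algebra R S] {μ : S} {n : ℕ} [NeZero n] (hμ : IsPrimitiveRoot μ n) {σ : S ≃ₐ[R] S} {k : ℕ}
    (hσ : σ μ = μ ^ k) : (hμ.autToPow R σ : ZMod n) = k := by
  rwa [← hμ.autToPow_spec R σ, (hμ.isOfFinOrder (NeZero.ne n)).pow_eq_pow_iff_modEq,
    ← hμ.eq_orderOf, ← ZMod.natCast_eq_natCast_iff, ZMod.natCast_zmod_val] at hσ

theorem natCast_notMem_of_isUnit_absNorm {S : Type*} [CommRing S] [IsDedekindDomain S]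
    [Module.Free ℤ S] {I : Ideal S} (hI : I ≠ ⊤) {n : ℕ}
    (h : IsUnit (absNorm I : ZMod n)) : (n : S) ∉ I := by
  intro hn
  have hcop : IsCoprime (absNorm I : S) (n : S) := by
    simpa using (Nat.isCoprime_iff_coprime.mpr ((ZMod.isUnit_iff_coprime _ _).mp h)).map
      (Int.castRingHom S)
  obtain ⟨a, b, hab⟩ := hcop
  refine hI (I.eq_top_iff_one.mpr (hab ▸ ?_))
  exact I.add_mem (I.mul_mem_left a (absNorm_mem I)) (I.mul_mem_left b hn)

end Frobenius

theorem finite_setOf_cast_absNorm_le (S : Type*) [CommRing S] [IsDedekindDomain S]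
    [Module.Free ℤ S] [Module.Finite ℤ S] [CharZero S] (x : ℝ) :
    {I : Ideal S | (absNorm I : ℝ) ≤ x}.Finite :=
  (finite_setOfPred_absNorm_le ⌊x⌋₊).subset fun _ h ↦ Nat.le_floor h

/-- The error term `ψ_K(x; q, u) − x / φ_K(q)` for `u ∈ G_q`, extended by zero to `(ℤ/qℤ)ˣ`: the
function on the full unit group to which Parseval's identity applies. -/
noncomputable def psiKError (K : Type*) [Field K] [NumberField K] (x : ℝ) (q : ℕ) : (ZMod q)ˣ → ℝ :=
  (Gq K q : Set (ZMod q)ˣ).indicator fun u ↦ psiK K x q u - x / phiK K q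

section Discrepancy

variable {K : Type*} [Field K] [NumberField K] {q : ℕ} [NeZero q]

theorem mem_Gq_of_coe_eq_absNorm {𝔭 : Ideal (𝓞 K)} [h𝔭 : 𝔭.IsPrime] (h0 : 𝔭 ≠ ⊥) {u : (ZMod q)ˣ}
    (hu : (u : ZMod q) = absNorm 𝔭) : u ∈ Gq K q := by
  have hq : 0 < q := NeZero.pos q
  have : NeZero (((⟨q, hq⟩ : ℕ+) : ℕ) : K) := ⟨Nat.cast_ne_zero.mpr hq.ne'⟩
  have : NumberField (CyclotomicField (⟨q, hq⟩ : ℕ+) K) :=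
    IsCyclotomicExtension.numberField {q} K _
  have : IsGalois K (CyclotomicField (⟨q, hq⟩ : ℕ+) K) :=
    IsCyclotomicExtension.isGalois {q} K _
  have hζ := IsCyclotomicExtension.zeta_spec (⟨q, hq⟩ : ℕ+) K (CyclotomicField (⟨q, hq⟩ : ℕ+) K)
  have hq𝔭 : (q : 𝓞 K) ∉ 𝔭 := natCast_notMem_of_isUnit_absNorm h𝔭.ne_top (hu ▸ u.isUnit)
  obtain ⟨σ, hσ⟩ := exists_algEquiv_apply_eq_pow_absNorm 𝔭 h0 hζ.pow_eq_one hq𝔭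
  rw [Gq, dif_pos hq]
  exact ⟨σ, Units.ext ((coe_autToPow_eq_of_apply_eq_pow hζ hσ).trans hu.symm)⟩

theorem IsPrimeIdealPower.mem_Gq {𝔞 : Ideal (𝓞 K)} (h𝔞 : IsPrimeIdealPower 𝔞) {u : (ZMod q)ˣ}
    (hu : (u : ZMod q) = absNorm 𝔞) : u ∈ Gq K q := by
  obtain ⟨𝔭, m, h𝔭, h0, hm, rfl⟩ := h𝔞
  rw [map_pow, Nat.cast_pow] at hu
  obtain ⟨v, hv⟩ := (isUnit_pow_iff (Nat.one_le_iff_ne_zero.mp hm)).mp (hu ▸ u.isUnit)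
  obtain rfl : u = v ^ m := Units.ext (by rw [hu, ← hv, Units.val_pow_eq_pow_val])
  exact pow_mem (mem_Gq_of_coe_eq_absNorm h0 hv) m

theorem psiK_eq_zero_of_notMem_Gq (x : ℝ) {u : (ZMod q)ˣ} (hu : u ∉ Gq K q) :
    psiK K x q u = 0 := by
  refine (tsum_congr fun 𝔞 ↦ ?_).trans tsum_zero
  refine ite_eq_right_iff.mpr fun h ↦ if_neg fun h𝔞 ↦ hu ?_
  exact h𝔞.mem_Gq h.2.symm

theorem psiKChi_eq_sum_units (x : ℝ) (χ : DirichletCharacter ℂ q) :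
    psiKChi K x χ = ∑ u : (ZMod q)ˣ, χ u * psiK K x q u := by
  have hterm (𝔞 : Ideal (𝓞 K)) :
      (if (absNorm 𝔞 : ℝ) ≤ x then χ (absNorm 𝔞 : ZMod q) * (LambdaK K 𝔞 : ℂ) else 0) =
        ∑ u : (ZMod q)ˣ, χ u * ((if (absNorm 𝔞 : ℝ) ≤ x ∧ (absNorm 𝔞 : ZMod q) = u
          then LambdaK K 𝔞 else 0 : ℝ) : ℂ) := by
    rw [mulChar_apply_eq_sum_units]
    split_ifs with h <;> simp [h, Finset.sum_mul, apply_ite]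
  have hsummable (u : (ZMod q)ˣ) : Summable fun 𝔞 : Ideal (𝓞 K) ↦ χ u *
      ((if (absNorm 𝔞 : ℝ) ≤ x ∧ (absNorm 𝔞 : ZMod q) = u then LambdaK K 𝔞 else 0 : ℝ) : ℂ) :=
    summable_of_hasFiniteSupport <| (finite_setOf_cast_absNorm_le (𝓞 K) x).subset fun 𝔞 ↦ by
      contrapose!
      intro (hx : ¬ (absNorm 𝔞 : ℝ) ≤ x)
      simp [hx]
  simp_rw [psiKChi, hterm, psiK, Complex.ofReal_tsum, ← tsum_mul_left]
  exact Summable.tsum_finsetSum fun u _ ↦ hsummable u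

theorem psiKError_eq_sub_indicator (x : ℝ) (u : (ZMod q)ˣ) :
    psiKError K x q u =
      psiK K x q u - (Gq K q : Set (ZMod q)ˣ).indicator (fun _ ↦ x / phiK K q) u := by
  by_cases hu : u ∈ Gq K q
  · simp [psiKError, hu]
  · simp [psiKError, hu, psiK_eq_zero_of_notMem_Gq]

theorem sum_mul_indicator_Gq (x : ℝ) (χ : DirichletCharacter ℂ q) :
    ∑ u : (ZMod q)ˣ, χ u *
        (((Gq K q : Set (ZMod q)ˣ).indicator (fun _ ↦ x / phiK K q) u : ℝ) : ℂ) =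
      if ∀ a ∈ Gq K q, χ (a : ZMod q) = 1 then (x : ℂ) else 0 := by
  have hphi : (phiK K q : ℂ) ≠ 0 := Nat.cast_ne_zero.mpr Nat.card_pos.ne'
  calc ∑ u : (ZMod q)ˣ, χ u *
        (((Gq K q : Set (ZMod q)ˣ).indicator (fun _ ↦ x / phiK K q) u : ℝ) : ℂ)
      = (∑ h : Gq K q, χ (h : (ZMod q)ˣ)) * (x / phiK K q : ℂ) := by
        rw [Finset.sum_mul, ← Finset.sum_subtype (Finset.univ.filter (· ∈ Gq K q)) (by simp)
          fun u ↦ χ u * (x / phiK K q : ℂ), Finset.sum_filter]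
        simp [Set.indicator_apply, apply_ite]
    _ = if ∀ a ∈ Gq K q, χ (a : ZMod q) = 1 then (x : ℂ) else 0 := by
        rw [sum_mulChar_subgroup_eq, ite_mul, zero_mul, ← phiK, mul_div_cancel₀ _ hphi]

theorem psiKChi'_eq_sum_units (x : ℝ) (χ : DirichletCharacter ℂ q) :
    psiKChi' K x χ = ∑ u : (ZMod q)ˣ, χ u * psiKError K x q u := by
  simp_rw [psiKError_eq_sub_indicator, Complex.ofReal_sub, mul_sub, Finset.sum_sub_distrib,
    ← psiKChi_eq_sum_units, sum_mul_indicator_Gq, psiKChi']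
  split_ifs <;> simp

theorem finsum_mem_Gq_sq_eq_sum_psiKError_sq (x : ℝ) :
    ∑ᶠ a ∈ Gq K q, (psiK K x q (a : ZMod q) - x / phiK K q) ^ 2 =
      ∑ u : (ZMod q)ˣ, psiKError K x q u ^ 2 := by
  rw [finsum_eq_sum_of_fintype]
  refine Finset.sum_congr rfl fun u _ ↦ ?_
  by_cases hu : u ∈ Gq K q <;> simp [psiKError, hu]

end Discrepancy

theorem sum_sq_error_eq_char_sum_general (K : Type*) [Field K] [NumberField K] (q : ℕ) [NeZero q]
    (x : ℝ) :
    ∑ᶠ a ∈ Gq K q, (psiK K x q (a : ZMod q) - x / phiK K q) ^ 2 =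
      (1 / q.totient : ℝ) * ∑ᶠ χ : DirichletCharacter ℂ q, ‖psiKChi' K x χ‖ ^ 2 := by
  have hcard : Nat.card (ZMod q)ˣ = q.totient := by
    rw [Nat.card_eq_fintype_card, ZMod.card_units_eq_totient]
  have htot : (q.totient : ℝ) ≠ 0 := hcard ▸ Nat.cast_ne_zero.mpr Nat.card_pos.ne'
  have hparseval : ∑ χ : DirichletCharacter ℂ q, ‖psiKChi' K x χ‖ ^ 2 =
      q.totient * ∑ u : (ZMod q)ˣ, psiKError K x q u ^ 2 := by
    simp_rw [psiKChi'_eq_sum_units, sum_mulChars_norm_sq_sum_mul, hcard, Complex.norm_real,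
      Real.norm_eq_abs, sq_abs]
  rw [finsum_mem_Gq_sq_eq_sum_psiKError_sq, finsum_eq_sum_of_fintype, hparseval, one_div,
    inv_mul_cancel_left₀ htot]

/-- **Orthogonality identity.**
For every `q ≥ 1` and `x > 0`,
`∑_{a ∈ G_q} (ψ_K(x;q,a) − x/φ_K(q))² = (1/φ(q)) ∑_{χ mod q} |ψ'_K(x, χ∘N)|²`. -/
theorem sum_sq_error_eq_char_sum (K : Type*) [Field K] [NumberField K] [IsGalois ℚ K]
    (q : ℕ) (hq : 1 ≤ q) (x : ℝ) (hx : 0 < x) :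
    ∑ᶠ a ∈ Gq K q, (psiK K x q (a : ZMod q) - x / phiK K q) ^ 2 =
      (1 / q.totient : ℝ) * ∑ᶠ χ : DirichletCharacter ℂ q, ‖psiKChi' K x χ‖ ^ 2 :=
  have : NeZero q := ⟨Nat.one_le_iff_ne_zero.mp hq⟩
  sum_sq_error_eq_char_sum_general K q x
end
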